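/- arXiv:1701.02158 — 3 statements merged into one kernel-verified Lean document; each statement's English description precedes it below -/
import Mathlib

section
/- For all nonnegative integers n and k and every complex number λ, the following convolution identity holds: y₁(n,k;−λ²) = (−1)^k · k! · 2^{−n} · ∑_{l=0}^{n} C(n,l) · S₂(l,k;λ) · y₁(n−l,k;λ). -/
/-!
Both families are coefficients of powers of exponential generating functions:
`(λ eᵗ + 1)ᵏ / k! = ∑ y₁(n,k;λ) tⁿ/n!` and `(λ eᵗ - 1)ᵏ / k! = ∑ S₂(n,k;λ) tⁿ/n!`, which is the
binomial theorem together with `(eᵗ)ʲ = e^{jt}` (`coeff_affine_exp_pow`). The identity then compares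
coefficients of `tⁿ` in the factorisation (`rescale_two_exp_factor`)
`(-λ² e^{2t} + 1)ᵏ = (-1)ᵏ (λ eᵗ - 1)ᵏ (λ eᵗ + 1)ᵏ`;
the substitution `t ↦ 2t` on the left accounts for the factor `2ⁿ`.
-/

open Finset

/-- The numbers `y₁(n,k;λ) = (1/k!) ∑_{j=0}^{k} C(k,j) λ^j j^n`. -/
noncomputable def y1 (n k : ℕ) (lam : ℂ) : ℂ :=
  (1 / (k.factorial : ℂ)) *
    ∑ j ∈ range (k + 1), (k.choose j : ℂ) * lam ^ j * (j : ℂ) ^ n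

/-- The λ-Stirling numbers of the second kind
`S₂(n,k;λ) = (1/k!) ∑_{j=0}^{k} (−1)^{k−j} C(k,j) λ^j j^n`. -/
noncomputable def stirling2 (n k : ℕ) (lam : ℂ) : ℂ :=
  (1 / (k.factorial : ℂ)) *
    ∑ j ∈ range (k + 1), (-1 : ℂ) ^ (k - j) * (k.choose j : ℂ) * lam ^ j * (j : ℂ) ^ n

open PowerSeries in
theorem coeff_affine_exp_pow (a b : ℂ) (n k : ℕ) :
    coeff n ((C a * exp ℂ + C b) ^ k) =
      (1 / (n.factorial : ℂ)) *
        ∑ j ∈ range (k + 1), b ^ (k - j) * (k.choose j : ℂ) * a ^ j * (j : ℂ) ^ n := by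
  rw [add_pow, map_sum, Finset.mul_sum]
  refine Finset.sum_congr rfl fun j _ => ?_
  have h : (C a * exp ℂ) ^ j * C b ^ (k - j) * ((k.choose j : ℕ) : ℂ⟦X⟧)
      = C (a ^ j * b ^ (k - j) * (k.choose j : ℂ)) * rescale (j : ℂ) (exp ℂ) := by
    rw [mul_pow, exp_pow_eq_rescale_exp]
    simp only [map_mul, map_pow, map_natCast]
    ring
  rw [h, coeff_C_mul, coeff_rescale, coeff_exp]
  simp only [map_div₀, map_one, map_natCast]
  ring

open PowerSeries in
theorem coeff_exp_add_one_pow (lam : ℂ) (n k : ℕ) :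
    coeff n ((C lam * exp ℂ + C 1) ^ k) =
      (k.factorial : ℂ) / (n.factorial : ℂ) * y1 n k lam := by
  have hk : (k.factorial : ℂ) ≠ 0 := by exact_mod_cast k.factorial_ne_zero
  rw [coeff_affine_exp_pow, y1]
  simp only [one_pow, one_mul]
  field_simp

open PowerSeries in
theorem coeff_exp_sub_one_pow (lam : ℂ) (n k : ℕ) :
    coeff n ((C lam * exp ℂ + C (-1)) ^ k) =
      (k.factorial : ℂ) / (n.factorial : ℂ) * stirling2 n k lam := by
  have hk : (k.factorial : ℂ) ≠ 0 := by exact_mod_cast k.factorial_ne_zero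
  rw [coeff_affine_exp_pow, stirling2]
  field_simp

open PowerSeries in
theorem rescale_two_exp_factor (lam : ℂ) (k : ℕ) :
    rescale (2 : ℂ) ((C (-lam ^ 2) * exp ℂ + C 1) ^ k) =
      C ((-1) ^ k) * ((C lam * exp ℂ + C (-1)) ^ k * (C lam * exp ℂ + C 1) ^ k) := by
  have h : rescale (2 : ℂ) (exp ℂ) = exp ℂ ^ 2 := by
    rw [exp_pow_eq_rescale_exp]
    norm_num
  have hC (a : ℂ) : rescale (2 : ℂ) (C a) = C a := by
    ext m
    rw [coeff_rescale, coeff_C]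
    split_ifs with hm <;> simp [hm]
  rw [map_pow, map_add, map_mul, hC, hC, h, map_pow, ← mul_pow, ← mul_pow]
  congr 1
  simp only [map_neg, map_pow, map_one]
  ring

theorem y1_conv (n k : ℕ) (lam : ℂ) :
    y1 n k (-lam ^ 2) =
      (-1 : ℂ) ^ k * (k.factorial : ℂ) * (2 : ℂ) ^ (-(n : ℤ)) *
        ∑ l ∈ range (n + 1),
          (n.choose l : ℂ) * stirling2 l k lam * y1 (n - l) k lam := by
  have hk : (k.factorial : ℂ) ≠ 0 := by exact_mod_cast k.factorial_ne_zero
  have hn : (n.factorial : ℂ) ≠ 0 := by exact_mod_cast n.factorial_ne_zero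
  have key := congrArg (PowerSeries.coeff n) (rescale_two_exp_factor lam k)
  rw [PowerSeries.coeff_rescale, coeff_exp_add_one_pow, PowerSeries.coeff_C_mul,
    PowerSeries.coeff_mul, Finset.Nat.sum_antidiagonal_eq_sum_range_succ_mk] at key
  simp only [coeff_exp_add_one_pow, coeff_exp_sub_one_pow] at key
  have hsum : ∑ l ∈ range (n + 1),
      ((k.factorial : ℂ) / (l.factorial : ℂ) * stirling2 l k lam) *
        ((k.factorial : ℂ) / ((n - l).factorial : ℂ) * y1 (n - l) k lam) =
      (k.factorial : ℂ) ^ 2 / (n.factorial : ℂ) * ∑ l ∈ range (n + 1),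
          (n.choose l : ℂ) * stirling2 l k lam * y1 (n - l) k lam := by
    rw [Finset.mul_sum]
    refine Finset.sum_congr rfl fun l hl => ?_
    have h1 : (l.factorial : ℂ) ≠ 0 := by exact_mod_cast l.factorial_ne_zero
    have h2 : ((n - l).factorial : ℂ) ≠ 0 := by exact_mod_cast (n - l).factorial_ne_zero
    rw [Nat.cast_choose ℂ (Nat.lt_succ_iff.mp (Finset.mem_range.mp hl))]
    field_simp
  rw [hsum] at key
  rw [zpow_neg, zpow_natCast]
  field_simp at key ⊢
  linear_combination key
end

section
/- For all nonnegative integers n and k, the following identity holds: S_{2k}^{2n}(−k) = (2k)! · 2^{−2n} · ∑_{l=0}^{n} C(2n,2l) · T(l,k) · y₂(2(n−l),k;1), where S_{2k}^{2n}(−k) denotes the array polynomial S_{2k}^{2n}(x;1) evaluated at x = −k. -/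
/-!
Write `A m = ∑ (-1)^i C(2k,i) (k-i)^m` and `B m = ∑ C(2k,j) (j-k)^m`, so that, up to factorials, the
right-hand side is `∑ C(2n,2l) A(2l) B(2n-2l)`, while the left-hand side is `A (2n) / (2k)!`.

The reflection `i ↦ 2k - i` gives `A m = (-1)^m A m`, so odd `A m` vanish and the convolution may be
taken over all `m ≤ 2n`. The binomial theorem then turns it into
`∑ᵢⱼ (-1)^i C(2k,i) C(2k,j) (i+j-2k)^(2n)`. This is the value on `(1-X)^(2k) (1+X)^(2k)` of the linear
functional `X^s ↦ (s-2k)^(2n)`. Since that polynomial is `(1-X²)^(2k)`, the value is also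
`∑ (-1)^j C(2k,j) (2j-2k)^(2n) = 2^(2n) A (2n)`.
-/

open Finset

/-- The λ-array polynomials
`S_v^n(x;λ) = (1/v!) ∑_{j=0}^{v} (−1)^{v−j} C(v,j) λ^j (x+j)^n`. -/
noncomputable def arrayPoly (n v : ℕ) (x lam : ℂ) : ℂ :=
  (1 / (v.factorial : ℂ)) *
    ∑ j ∈ range (v + 1), (-1 : ℂ) ^ (v - j) * (v.choose j : ℂ) * lam ^ j * (x + j) ^ n

/-- The central factorial numbers of the second kind
`T(n,k) = (1/(2k)!) ∑_{j=0}^{2k} (−1)^j C(2k,j) (k−j)^{2n}`. -/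
noncomputable def centralFactorial (n k : ℕ) : ℂ :=
  (1 / ((2 * k).factorial : ℂ)) *
    ∑ j ∈ range (2 * k + 1),
      (-1 : ℂ) ^ j * ((2 * k).choose j : ℂ) * ((k : ℂ) - j) ^ (2 * n)

/-- The numbers `y₂(n,k;λ) = (1/(2k)!) ∑_{j=0}^{2k} C(2k,j) λ^{j−k} (j−k)^n`. -/
noncomputable def y2 (n k : ℕ) (lam : ℂ) : ℂ :=
  (1 / ((2 * k).factorial : ℂ)) *
    ∑ j ∈ range (2 * k + 1),
      ((2 * k).choose j : ℂ) * lam ^ ((j : ℤ) - k) * ((j : ℂ) - k) ^ n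

/-- The unnormalised alternating moment `∑ (-1)^i C(2k,i) (k-i)^m`, equal to `(2k)! T(m/2,k)` for even
`m`. -/
noncomputable def altMoment (k m : ℕ) : ℂ :=
  ∑ i ∈ range (2 * k + 1), (-1 : ℂ) ^ i * ((2 * k).choose i : ℂ) * ((k : ℂ) - i) ^ m

/-- The unnormalised moment `∑ C(2k,j) (j-k)^m`, equal to `(2k)! y₂(m,k;1)`. -/
noncomputable def posMoment (k m : ℕ) : ℂ :=
  ∑ j ∈ range (2 * k + 1), ((2 * k).choose j : ℂ) * ((j : ℂ) - k) ^ m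

lemma neg_one_pow_two_mul_sub {k i : ℕ} (hi : i ≤ 2 * k) :
    (-1 : ℂ) ^ (2 * k - i) = (-1) ^ i := by
  rw [neg_one_pow_eq_pow_mod_two, neg_one_pow_eq_pow_mod_two (n := i)]
  congr 1
  omega

/-- The reflection `i ↦ 2k - i` of the summation index. -/
lemma altMoment_reflect (k m : ℕ) :
    altMoment k m =
      ∑ i ∈ range (2 * k + 1), (-1 : ℂ) ^ i * ((2 * k).choose i : ℂ) * ((i : ℂ) - k) ^ m := by
  rw [altMoment, ← Finset.sum_range_reflect]
  refine Finset.sum_congr rfl fun i hi => ?_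
  have hi' : i ≤ 2 * k := by
    have := Finset.mem_range.mp hi
    omega
  have e : 2 * k + 1 - 1 - i = 2 * k - i := by omega
  rw [e, neg_one_pow_two_mul_sub hi', Nat.choose_symm hi', Nat.cast_sub hi']
  push_cast
  ring

lemma altMoment_odd (k l : ℕ) : altMoment k (2 * l + 1) = 0 := by
  have h : altMoment k (2 * l + 1) = -altMoment k (2 * l + 1) := by
    conv_lhs => rw [altMoment_reflect]
    rw [altMoment, ← Finset.sum_neg_distrib]
    refine Finset.sum_congr rfl fun i _ => ?_
    rw [← neg_sub (k : ℂ) i, Odd.neg_pow ⟨l, rfl⟩]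
    ring
  exact self_eq_neg.mp h

lemma sum_range_even {f : ℕ → ℂ} (hf : ∀ l, f (2 * l + 1) = 0) (n : ℕ) :
    ∑ m ∈ range (2 * n + 1), f m = ∑ l ∈ range (n + 1), f (2 * l) := by
  induction n with
  | zero => simp
  | succ n ih =>
    rw [Finset.sum_range_succ _ (n + 1), ← ih, show 2 * (n + 1) + 1 = 2 * n + 1 + 1 + 1 by ring,
      Finset.sum_range_succ, Finset.sum_range_succ, hf, add_zero]
    rfl

open Polynomial in
/-- Both sides are values of the functional `X^s ↦ (s-2k)^N`, on `(1-X)^(2k) (1+X)^(2k)` and on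
`(1-X²)^(2k)` respectively. -/
lemma double_sum_eq (k N : ℕ) :
    ∑ i ∈ range (2 * k + 1), ∑ j ∈ range (2 * k + 1),
      ((-1 : ℂ) ^ i * ((2 * k).choose i : ℂ)) * ((2 * k).choose j : ℂ) *
        (((i : ℂ) - k) + ((j : ℂ) - k)) ^ N = 2 ^ N * altMoment k N := by
  let L : ℂ[X] →ₗ[ℂ] ℂ := (Polynomial.basisMonomials ℂ).constr ℂ fun s => ((s : ℂ) - 2 * k) ^ N
  have hL (a : ℂ) (s : ℕ) : L (C a * X ^ s) = a * ((s : ℂ) - 2 * k) ^ N := by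
    have h := (Polynomial.basisMonomials ℂ).constr_basis ℂ (fun s : ℕ => ((s : ℂ) - 2 * k) ^ N) s
    rw [Polynomial.coe_basisMonomials] at h
    rw [← smul_eq_C_mul, map_smul, X_pow_eq_monomial, smul_eq_mul]
    exact congrArg (a * ·) h
  have hneg (Y : ℂ[X]) : (-Y + 1) ^ (2 * k) =
      ∑ i ∈ range (2 * k + 1), C ((-1 : ℂ) ^ i * ((2 * k).choose i : ℂ)) * Y ^ i := by
    rw [add_pow]
    refine Finset.sum_congr rfl fun i _ => ?_
    rw [neg_pow Y]
    simp
    ring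
  have hpos : (X + 1 : ℂ[X]) ^ (2 * k) =
      ∑ j ∈ range (2 * k + 1), C ((2 * k).choose j : ℂ) * X ^ j := by
    rw [add_pow]
    refine Finset.sum_congr rfl fun i _ => ?_
    simp
    ring
  have key : (-X + 1 : ℂ[X]) ^ (2 * k) * (X + 1) ^ (2 * k) = (-X ^ 2 + 1) ^ (2 * k) := by
    rw [← mul_pow]
    ring
  rw [hneg, hneg, hpos, Finset.sum_mul_sum] at key
  have h := congrArg L key
  simp only [map_sum] at h
  rw [altMoment_reflect, Finset.mul_sum]
  convert h using 1
  · refine Finset.sum_congr rfl fun i _ => Finset.sum_congr rfl fun j _ => ?_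
    rw [mul_mul_mul_comm, ← C_mul, ← pow_add, hL]
    push_cast
    ring
  · refine Finset.sum_congr rfl fun i _ => ?_
    rw [← pow_mul, hL]
    push_cast
    rw [← mul_sub, mul_pow]
    ring

lemma conv_full (k N : ℕ) :
    ∑ m ∈ range (N + 1), (N.choose m : ℂ) * altMoment k m * posMoment k (N - m) =
      2 ^ N * altMoment k N := by
  rw [← double_sum_eq]
  simp_rw [altMoment_reflect, posMoment, mul_assoc, Finset.sum_mul_sum, add_pow, Finset.mul_sum]
  rw [Finset.sum_comm]
  refine Finset.sum_congr rfl fun i _ => ?_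
  rw [Finset.sum_comm]
  refine Finset.sum_congr rfl fun j _ => Finset.sum_congr rfl fun m _ => ?_
  ring

lemma conv_even (k n : ℕ) :
    ∑ l ∈ range (n + 1),
      ((2 * n).choose (2 * l) : ℂ) * altMoment k (2 * l) * posMoment k (2 * (n - l)) =
      2 ^ (2 * n) * altMoment k (2 * n) := by
  rw [← conv_full, sum_range_even (n := n) fun l => by rw [altMoment_odd, mul_zero, zero_mul]]
  simp_rw [Nat.mul_sub]

lemma arrayPoly_eq_altMoment (n k : ℕ) :
    arrayPoly (2 * n) (2 * k) (-(k : ℂ)) 1 =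
      1 / ((2 * k).factorial : ℂ) * altMoment k (2 * n) := by
  rw [arrayPoly, altMoment_reflect]
  congr 1
  refine Finset.sum_congr rfl fun j hj => ?_
  rw [neg_one_pow_two_mul_sub (by have := Finset.mem_range.mp hj; omega)]
  ring

lemma y2_one_eq_posMoment (m k : ℕ) :
    y2 m k 1 = 1 / ((2 * k).factorial : ℂ) * posMoment k m := by
  simp [y2, posMoment]

theorem arrayPoly_eq_centralFactorial_conv_y2 (n k : ℕ) :
    arrayPoly (2 * n) (2 * k) (-(k : ℂ)) 1 =
      ((2 * k).factorial : ℂ) * (2 : ℂ) ^ (-(2 * n : ℤ)) *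
        ∑ l ∈ range (n + 1),
          ((2 * n).choose (2 * l) : ℂ) * centralFactorial l k * y2 (2 * (n - l)) k 1 := by
  have h0 : ((2 * k).factorial : ℂ) ≠ 0 := Nat.cast_ne_zero.mpr (Nat.factorial_ne_zero _)
  have hT (l : ℕ) : centralFactorial l k =
      1 / ((2 * k).factorial : ℂ) * altMoment k (2 * l) := rfl
  have hz : (2 : ℂ) ^ (-(2 * n : ℤ)) = ((2 : ℂ) ^ (2 * n))⁻¹ := by
    rw [zpow_neg]
    exact_mod_cast rfl
  have hsum : ∑ l ∈ range (n + 1),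
      ((2 * n).choose (2 * l) : ℂ) * centralFactorial l k * y2 (2 * (n - l)) k 1 =
      (1 / ((2 * k).factorial : ℂ)) ^ 2 * (2 ^ (2 * n) * altMoment k (2 * n)) := by
    rw [← conv_even, Finset.mul_sum]
    refine Finset.sum_congr rfl fun l _ => ?_
    rw [hT, y2_one_eq_posMoment]
    ring
  rw [hsum, arrayPoly_eq_altMoment, hz]
  field_simp
end

section
/- For all nonnegative integers n and k, the central factorial numbers are computed from the second kind Euler numbers of negative order by T(n,k) = (2^{2k−2n}/(2k)!) · ∑_{j=0}^{k} (−1)^{k−j} C(k,j) · E*_{2n}^{(−2j)}. -/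
/-!
The identity compares coefficients of `t ^ (2 * n)` in two expansions of one power series. With
`expSeries a` the formal series of `e^{at}`, the binomial theorem identifies `eulerStar n k / n!`
with a coefficient of `cosh t ^ k` (`coeff_cosh_pow`), and `centralFactorial n k`, up to the factor
`2 ^ (2 * n) * (2 * k)! / (2 * n)!`, with a coefficient of `(2 * sinh t) ^ (2 * k)`
(`coeff_sinh_pow`). The theorem is then `sinh² = cosh² - 1` raised to the power `k`, with the
right-hand side expanded by the binomial theorem (`sinh_pow_eq`).
-/

open Finset

/-- The second kind Euler numbers of order `−k`:
`E*_n^{(−k)} = 2^{−k} ∑_{j=0}^{k} C(k,j) (2j−k)^n`. -/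
noncomputable def eulerStar (n k : ℕ) : ℂ :=
  (2 : ℂ) ^ (-(k : ℤ)) *
    ∑ j ∈ range (k + 1), (k.choose j : ℂ) * ((2 * j : ℂ) - k) ^ n

/-- The formal power series of `e^{at}`. -/
noncomputable def expSeries (a : ℂ) : PowerSeries ℂ :=
  PowerSeries.rescale a (PowerSeries.exp ℂ)

theorem expSeries_mul (a b : ℂ) : expSeries a * expSeries b = expSeries (a + b) :=
  PowerSeries.exp_mul_exp_eq_exp_add a b

theorem expSeries_zero : expSeries 0 = 1 := by
  simp [expSeries]

theorem expSeries_pow (a : ℂ) (m : ℕ) : expSeries a ^ m = expSeries (m * a) := by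
  induction m with
  | zero => simp [expSeries_zero]
  | succ m ih =>
    rw [pow_succ, ih, expSeries_mul]
    congr 1
    push_cast
    ring

theorem coeff_expSeries (n : ℕ) (a : ℂ) :
    PowerSeries.coeff n (expSeries a) = a ^ n / (n.factorial : ℂ) := by
  simp [expSeries, PowerSeries.coeff_rescale, PowerSeries.coeff_exp, div_eq_mul_inv]

/-- The generating function of the second kind Euler numbers of order `-k` is `cosh t ^ k`. -/
theorem coeff_cosh_pow (n k : ℕ) :
    PowerSeries.coeff n
        ((PowerSeries.C (1 / 2 : ℂ) * (expSeries 1 + expSeries (-1))) ^ k) =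
      eulerStar n k / (n.factorial : ℂ) := by
  rw [mul_pow, ← map_pow, PowerSeries.coeff_C_mul, add_pow, map_sum, eulerStar, mul_div_assoc,
    Finset.sum_div]
  congr 1
  · rw [zpow_neg, zpow_natCast, one_div, inv_pow]
  · refine Finset.sum_congr rfl fun j hj => ?_
    have hjk : j ≤ k := Nat.lt_succ_iff.mp (Finset.mem_range.mp hj)
    rw [expSeries_pow, expSeries_pow, expSeries_mul, mul_comm,
      ← map_natCast (PowerSeries.C (R := ℂ)), PowerSeries.coeff_C_mul, coeff_expSeries,
      Nat.cast_sub hjk]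
    ring

/-- The generating function of the central factorial numbers, evaluated at `2t`,
where `e^{2t} + e^{-2t} - 2 = (e^t - e^{-t})²`. -/
theorem coeff_sinh_pow (n k : ℕ) :
    PowerSeries.coeff (2 * n) ((expSeries 1 - expSeries (-1)) ^ (2 * k)) =
      (2 : ℂ) ^ (2 * n) * ((2 * k).factorial : ℂ) * centralFactorial n k /
        ((2 * n).factorial : ℂ) := by
  have hk : ((2 * k).factorial : ℂ) ≠ 0 := Nat.cast_ne_zero.mpr (Nat.factorial_ne_zero _)
  rw [centralFactorial, mul_assoc, ← mul_assoc ((2 * k).factorial : ℂ), mul_one_div_cancel hk,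
    one_mul, Finset.mul_sum, Finset.sum_div, sub_eq_neg_add, add_pow, map_sum]
  refine Finset.sum_congr rfl fun j hj => ?_
  have hjk : j ≤ 2 * k := Nat.lt_succ_iff.mp (Finset.mem_range.mp hj)
  have h : (-expSeries (-1)) ^ j * expSeries 1 ^ (2 * k - j) * (((2 * k).choose j : ℕ) : PowerSeries ℂ)
      = PowerSeries.C ((-1 : ℂ) ^ j * ((2 * k).choose j : ℂ)) *
        expSeries (2 * ((k : ℂ) - j)) := by
    have e : (2 * ((k : ℂ) - j)) = (j : ℂ) * (-1) + ((2 * k - j : ℕ) : ℂ) * 1 := by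
      rw [Nat.cast_sub hjk]
      push_cast
      ring
    rw [neg_pow, expSeries_pow, expSeries_pow, e, ← expSeries_mul]
    simp only [map_mul, map_pow, map_neg, map_one, map_natCast]
    ring
  rw [h, PowerSeries.coeff_C_mul, coeff_expSeries, mul_pow]
  ring

/-- `sinh² = cosh² - 1`, raised to the power `k`, multiplied by `2 ^ (2 * k)` and expanded. -/
theorem sinh_pow_eq (k : ℕ) :
    (expSeries 1 - expSeries (-1)) ^ (2 * k) =
      PowerSeries.C ((2 : ℂ) ^ (2 * k)) *
        ∑ j ∈ range (k + 1), PowerSeries.C ((-1 : ℂ) ^ (k - j) * (k.choose j : ℂ)) *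
          (PowerSeries.C (1 / 2 : ℂ) * (expSeries 1 + expSeries (-1))) ^ (2 * j) := by
  have h1 : expSeries 1 * expSeries (-1) = 1 := by
    rw [expSeries_mul, add_neg_cancel, expSeries_zero]
  have h2 : PowerSeries.C (2 : ℂ) * PowerSeries.C (1 / 2 : ℂ) = 1 := by
    rw [← map_mul]
    norm_num
  have h3 : PowerSeries.C (2 : ℂ) = 2 := map_ofNat _ 2
  have key : (expSeries 1 - expSeries (-1)) ^ 2 = PowerSeries.C (2 : ℂ) ^ 2 *
      ((PowerSeries.C (1 / 2 : ℂ) * (expSeries 1 + expSeries (-1))) ^ 2 + -1) := by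
    rw [mul_add, ← mul_pow, ← mul_assoc, h2, h3]
    linear_combination (-4) * h1
  rw [pow_mul, key, mul_pow, ← pow_mul, ← map_pow, add_pow]
  congr 1
  refine Finset.sum_congr rfl fun j _ => ?_
  simp only [map_mul, map_pow, map_neg, map_one, map_natCast, pow_mul]
  ring

theorem centralFactorial_eq_eulerStar (n k : ℕ) :
    centralFactorial n k =
      ((2 : ℂ) ^ (2 * (k : ℤ) - 2 * n) / ((2 * k).factorial : ℂ)) *
        ∑ j ∈ range (k + 1),
          (-1 : ℂ) ^ (k - j) * (k.choose j : ℂ) * eulerStar (2 * n) (2 * j) := by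
  have hk : ((2 * k).factorial : ℂ) ≠ 0 := Nat.cast_ne_zero.mpr (Nat.factorial_ne_zero _)
  have hn : ((2 * n).factorial : ℂ) ≠ 0 := Nat.cast_ne_zero.mpr (Nat.factorial_ne_zero _)
  have h := coeff_sinh_pow n k
  rw [sinh_pow_eq, PowerSeries.coeff_C_mul, map_sum] at h
  simp only [PowerSeries.coeff_C_mul, coeff_cosh_pow, ← mul_div_assoc] at h
  rw [← Finset.sum_div, ← mul_div_assoc, div_left_inj' hn] at h
  have hz : (2 : ℂ) ^ (2 * (k : ℤ) - 2 * n) = 2 ^ (2 * k) / 2 ^ (2 * n) := by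
    rw [zpow_sub₀ two_ne_zero]
    norm_cast
  rw [hz, div_div, div_mul_eq_mul_div, h]
  field_simp
end
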